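/- For a uniformly random polynomial f of degree ≤ 2 over F₂ in n variables (with no constant term), E[ngap(f)²] = 2^{-n}. -/

import Mathlib

/-!
Fix the quadratic part `q` of the polynomial and average over the linear part `γ` only. As a
function of `γ`, the normalized gap of `x ↦ q x + γ ⬝ᵥ x` is, up to scaling, the Fourier transform
of the phase `x ↦ (-1) ^ q x`. Phases have modulus one, so Parseval's identity gives a second
moment that does not depend on `q`, and averaging over `q` changes nothing.
-/

open Finset

open AddChar
open scoped BigOperators

section CharacterSums

theorem addChar_sum_eq_prod {α A M : Type*} [AddCommMonoid A] [CommMonoid M] (ψ : AddChar A M)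
    (s : Finset α) (f : α → A) : ψ (∑ i ∈ s, f i) = ∏ i ∈ s, ψ (f i) :=
  map_prod ψ.toMonoidHom (fun i ↦ Multiplicative.ofAdd (f i)) s

variable {ι K R : Type*} [Fintype ι] [DecidableEq ι] [CommRing K] [Fintype K] [CommRing R]
  [IsDomain R] {ψ : AddChar K R}

theorem sum_addChar_dotProduct_eq_ite [DecidableEq K] (hψ : ψ.IsPrimitive) (x : ι → K) :
    ∑ γ : ι → K, ψ (γ ⬝ᵥ x) = if x = 0 then (Fintype.card (ι → K) : R) else 0 := by
  calc ∑ γ : ι → K, ψ (γ ⬝ᵥ x)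
      = ∑ γ : ι → K, ∏ i, ψ (γ i * x i) := by simp only [dotProduct, addChar_sum_eq_prod]
    _ = ∏ i, ∑ a, ψ (a * x i) := (Fintype.prod_sum fun i a ↦ ψ (a * x i)).symm
    _ = ∏ i, if x i = 0 then (Fintype.card K : R) else 0 := by
      simp only [sum_mulShift _ hψ, Nat.cast_ite, Nat.cast_zero]
    _ = if x = 0 then (Fintype.card (ι → K) : R) else 0 := by
      simp [Fintype.prod_ite_zero, funext_iff]

theorem sum_fourier_mul_fourier_inv (hψ : ψ.IsPrimitive) (f g : (ι → K) → R) :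
    ∑ γ : ι → K, (∑ x, f x * ψ (γ ⬝ᵥ x)) * ∑ y, g y * ψ⁻¹ (γ ⬝ᵥ y)
      = Fintype.card (ι → K) * ∑ x, f x * g x := by
  classical
  have expand (γ : ι → K) : (∑ x, f x * ψ (γ ⬝ᵥ x)) * ∑ y, g y * ψ⁻¹ (γ ⬝ᵥ y)
      = ∑ x, ∑ y, f x * g y * ψ (γ ⬝ᵥ (x - y)) := by
    simp only [sum_mul_sum, dotProduct_sub, sub_eq_add_neg (γ ⬝ᵥ _), map_add_eq_mul, inv_apply,
      mul_mul_mul_comm]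
  calc ∑ γ : ι → K, (∑ x, f x * ψ (γ ⬝ᵥ x)) * ∑ y, g y * ψ⁻¹ (γ ⬝ᵥ y)
      = ∑ x, ∑ y, f x * g y * ∑ γ : ι → K, ψ (γ ⬝ᵥ (x - y)) := by
        simp only [expand, mul_sum]
        rw [sum_comm]
        exact sum_congr rfl fun x _ ↦ sum_comm
    _ = Fintype.card (ι → K) * ∑ x, f x * g x := by
        simp only [sum_addChar_dotProduct_eq_ite hψ, sub_eq_zero, mul_ite, mul_zero,
          Fintype.sum_ite_eq, mul_sum, mul_comm]

end CharacterSums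

section NormalizedGap

variable {ι κ V K R : Type*} [Fintype ι] [DecidableEq ι] [Fintype κ] [Fintype V]
  [CommRing K] [Field R] [CharZero R] {ψ : AddChar K R}

/-- The normalized gap `ngap(f)` of a function `f`, with the sign `(-1)^f(x)` generalized to an
arbitrary additive character `ψ` of the ring of values; see `signChar` for the sign itself. -/
noncomputable def ngap (ψ : AddChar K R) (f : V → K) : R := 𝔼 x, ψ (f x)

-- For complex `ψ` the value `ψ⁻¹ a` is the conjugate of `ψ a`, so this product is `|ngap|²`.
theorem expect_ngap_mul_ngap_inv [Fintype K] (hψ : ψ.IsPrimitive) (q : (ι → K) → K) :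
    𝔼 γ : ι → K, ngap ψ (fun x ↦ q x + γ ⬝ᵥ x) * ngap ψ⁻¹ (fun x ↦ q x + γ ⬝ᵥ x)
      = (Fintype.card (ι → K) : R)⁻¹ := by
  have phase_mul_inv (x : ι → K) : ψ (q x) * ψ⁻¹ (q x) = 1 := by
    rw [← mul_apply, mul_inv_cancel, one_apply]
  have parseval := sum_fourier_mul_fourier_inv hψ (fun x ↦ ψ (q x)) (fun x ↦ ψ⁻¹ (q x))
  simp only [phase_mul_inv, ← map_add_eq_mul] at parseval
  simp only [ngap, Fintype.expect_eq_sum_div_card, div_mul_div_comm, ← sum_div, parseval,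
    sum_const, card_univ, nsmul_eq_mul, mul_one]
  field_simp

theorem second_moment_ngap_deg2_general [Nonempty κ] [Fintype K] (hψ : ψ.IsPrimitive)
    (q : κ → (ι → K) → K) :
    𝔼 k, 𝔼 γ : ι → K, ngap ψ (fun x ↦ q k x + γ ⬝ᵥ x) * ngap ψ⁻¹ (fun x ↦ q k x + γ ⬝ᵥ x)
      = (Fintype.card (ι → K) : R)⁻¹ := by
  simp only [expect_ngap_mul_ngap_inv hψ, Fintype.expect_const]

end NormalizedGap

section SignCharacter

/-- The sign character `a ↦ (-1)^a` of `F₂`, which turns the general `ngap` into that of a Boolean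
function. It takes values in `ℝ` rather than `ℂ`, so that second moments are plain squares. -/
def signChar : AddChar (ZMod 2) ℝ := zmodChar 2 neg_one_sq

theorem signChar_apply (a : ZMod 2) : signChar a = if a = 0 then 1 else -1 := by
  obtain rfl | rfl : a = 0 ∨ a = 1 := by decide +revert
  · simp
  · simp [signChar, zmodChar_apply, ZMod.val_one]

theorem signChar_isPrimitive : signChar.IsPrimitive :=
  zmodChar_primitive_of_primitive_root 2 (IsPrimitiveRoot.neg_one 0 two_ne_zero.symm)

theorem signChar_inv : signChar⁻¹ = signChar := by
  ext a
  rw [inv_apply, ZMod.neg_eq_self_mod_two]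

theorem ngap_signChar {V : Type*} [Fintype V] (f : V → ZMod 2) :
    ngap signChar f = (1 / Fintype.card V : ℝ) * ∑ x, if f x = 0 then 1 else -1 := by
  simp only [ngap, Fintype.expect_eq_sum_div_card, signChar_apply, div_eq_inv_mul, mul_one]

theorem expect_expect_ngap_signChar {α β : Type*} [Fintype α] [Fintype β] {n : ℕ}
    (f : α → β → (Fin n → ZMod 2) → ZMod 2) :
    𝔼 a, 𝔼 b, ngap signChar (f a b) * ngap signChar⁻¹ (f a b)
      = (∑ a, ∑ b, ((1 / 2 ^ n : ℝ) * ∑ x, if f a b x = 0 then 1 else -1) ^ 2)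
        / (Fintype.card α * Fintype.card β) := by
  have card_cube : (Fintype.card (Fin n → ZMod 2) : ℝ) = 2 ^ n := by simp [ZMod.card]
  simp only [signChar_inv, ← sq, ngap_signChar, card_cube, Fintype.expect_eq_sum_div_card,
    ← sum_div, div_div, mul_comm (Fintype.card α : ℝ)]

end SignCharacter

/-- For a uniformly random polynomial of degree `≤ 2` over `F₂` in `n` variables
(with no constant term), the second moment of the normalized gap is exactly
`E[ngap(f)²] = 2^{-n}`. -/
theorem second_moment_ngap_deg2 (n : ℕ) (hn : 0 < n) :
    (∑ β : {p : Fin n × Fin n // p.1 < p.2} → ZMod 2, ∑ γ : Fin n → ZMod 2,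
        ((1 / 2 ^ n : ℝ) * ∑ x : Fin n → ZMod 2,
          (if (∑ p : {p : Fin n × Fin n // p.1 < p.2}, β p * x p.1.1 * x p.1.2)
              + (∑ i : Fin n, γ i * x i) = 0 then (1 : ℝ) else -1)) ^ 2)
      / ((Fintype.card ({p : Fin n × Fin n // p.1 < p.2} → ZMod 2) : ℝ)
          * (Fintype.card (Fin n → ZMod 2) : ℝ))
    = 2 ^ (-(n : ℤ)) := by
  let q (β : {p : Fin n × Fin n // p.1 < p.2} → ZMod 2) (x : Fin n → ZMod 2) : ZMod 2 :=
    ∑ p, β p * x p.1.1 * x p.1.2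
  exact (expect_expect_ngap_signChar fun β γ x ↦ q β x + γ ⬝ᵥ x).symm.trans <|
    (second_moment_ngap_deg2_general signChar_isPrimitive q).trans <| by simp [ZMod.card]
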